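/- Let a > 0 and b > 0 be constants and λ ∈ ℝ. The problem u''''(x) − (a + b∫₀¹(u'(t))²dt)·u''(x) = λ·u(x) on (0,1) with u(0) = u(1) = u''(0) = u''(1) = 0 has a solution u ∈ C⁴([0,1]) with u(x) > 0 for all x ∈ (0,1) if and only if λ > π⁴ + a·π². -/

import Mathlib

/-!
Writing `K` for the Kirchhoff coefficient of `u` and `s x = sin (π x)`, the concomitant
`W = u''' s - u'' s' + u' s'' - u s''' - K (u' s - u s')` vanishes at both endpoints by the boundary
conditions, and `W' = (λ - π⁴ - K π²) u s` on `(0,1)`. Rolle's theorem and the positivity of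
`u` and `s` force `λ = π⁴ + K π²` (`lam_eq_of_solution`). Since a positive `u` is not constant,
`∫ (u')² > 0`, so `K > a` and `λ > π⁴ + a π²`.

Conversely, `c sin (π x)` has Kirchhoff coefficient `a + b c² π² / 2`, and solves the problem as soon
as `λ = π⁴ + (a + b c² π² / 2) π²`, which can be solved for `c > 0` when `λ > π⁴ + a π²`.
-/

open Set MeasureTheory intervalIntegral Real Filter Topology

/-- The `n`-th derivative of `u` on the interval `[0,1]` (one-sided at the endpoints). -/
noncomputable def D (n : ℕ) (u : ℝ → ℝ) : ℝ → ℝ :=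
  iteratedDerivWithin n u (Set.Icc 0 1)

/-- The supremum norm `‖u‖∞ = sup_{x ∈ [0,1]} |u x|`. -/
noncomputable def normInf (u : ℝ → ℝ) : ℝ :=
  ⨆ x : Set.Icc (0:ℝ) 1, |u x|

/-- The hinged boundary conditions `u(0) = u(1) = u''(0) = u''(1) = 0`. -/
def BC (u : ℝ → ℝ) : Prop :=
  u 0 = 0 ∧ u 1 = 0 ∧ D 2 u 0 = 0 ∧ D 2 u 1 = 0

/-- The Kirchhoff nonlocal coefficient `a + b ∫₀¹ (u'(t))² dt`. -/
noncomputable def KCoef (a b : ℝ) (u : ℝ → ℝ) : ℝ :=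
  a + b * ∫ t in (0:ℝ)..1, (D 1 u t) ^ 2

lemma D_zero (u : ℝ → ℝ) (x : ℝ) : D 0 u x = u x := by
  simp [D]

lemma D_continuousOn {u : ℝ → ℝ} (hu : ContDiffOn ℝ 4 u (Icc 0 1)) {n : ℕ} (hn : n ≤ 4) :
    ContinuousOn (D n u) (Icc 0 1) :=
  hu.continuousOn_iteratedDerivWithin (by exact_mod_cast hn) (uniqueDiffOn_Icc one_pos)

lemma D_hasDerivAt {u : ℝ → ℝ} (hu : ContDiffOn ℝ 4 u (Icc 0 1)) {n : ℕ} (hn : n < 4)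
    {x : ℝ} (hx : x ∈ Ioo (0:ℝ) 1) : HasDerivAt (D n u) (D (n + 1) u x) x := by
  have h := hu.differentiableOn_iteratedDerivWithin (m := n) (by exact_mod_cast hn)
    (uniqueDiffOn_Icc one_pos) x (Ioo_subset_Icc_self hx)
  have h2 := h.hasDerivWithinAt
  rw [← iteratedDerivWithin_succ] at h2
  exact h2.hasDerivAt (Icc_mem_nhds hx.1 hx.2)

lemma sin_pi_pos {x : ℝ} (hx : x ∈ Ioo (0:ℝ) 1) : 0 < sin (π * x) :=
  sin_pos_of_pos_of_lt_pi (mul_pos pi_pos hx.1) (by nlinarith [pi_pos, hx.2])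

lemma hasDerivAt_sin_pi (x : ℝ) : HasDerivAt (fun x => sin (π * x)) (π * cos (π * x)) x := by
  have := ((hasDerivAt_id x).const_mul π).sin
  exact this.congr_deriv (by simp only [id]; ring)

lemma hasDerivAt_cos_pi (x : ℝ) : HasDerivAt (fun x => cos (π * x)) (-(π * sin (π * x))) x := by
  have := ((hasDerivAt_id x).const_mul π).cos
  exact this.congr_deriv (by simp only [id]; ring)

/-- For a constant coefficient `K`, the linear hinged problem has a positive solution only at the
principal eigenvalue `π⁴ + K π²`. -/
lemma lam_eq_of_solution {u : ℝ → ℝ} {K lam : ℝ} (hu : ContDiffOn ℝ 4 u (Icc 0 1))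
    (heq : ∀ x ∈ Ioo (0:ℝ) 1, D 4 u x - K * D 2 u x = lam * u x) (hbc : BC u)
    (hpos : ∀ x ∈ Ioo (0:ℝ) 1, 0 < u x) : lam = π ^ 4 + K * π ^ 2 := by
  obtain ⟨h0, h1, h20, h21⟩ := hbc
  let W : ℝ → ℝ := fun x =>
    D 3 u x * sin (π * x) - D 2 u x * (π * cos (π * x)) - D 1 u x * (π ^ 2 * sin (π * x))
      + D 0 u x * (π ^ 3 * cos (π * x))
      - K * (D 1 u x * sin (π * x) - D 0 u x * (π * cos (π * x)))
  have c0 := D_continuousOn hu (n := 0) (by norm_num)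
  have c1 := D_continuousOn hu (n := 1) (by norm_num)
  have c2 := D_continuousOn hu (n := 2) (by norm_num)
  have c3 := D_continuousOn hu (n := 3) (by norm_num)
  have hWc : ContinuousOn W (Icc 0 1) := by fun_prop
  have hW : W 0 = W 1 := by simp [W, D_zero, h0, h1, h20, h21]
  obtain ⟨x, hx, hx0⟩ := exists_hasDerivAt_eq_zero (f := W)
    (f' := fun x => (lam - π ^ 4 - K * π ^ 2) * (u x * sin (π * x))) one_pos hWc hW (by
      intro x hx
      have d0 := D_hasDerivAt hu (n := 0) (by norm_num) hx
      have d1 := D_hasDerivAt hu (n := 1) (by norm_num) hx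
      have d2 := D_hasDerivAt hu (n := 2) (by norm_num) hx
      have d3 := D_hasDerivAt hu (n := 3) (by norm_num) hx
      have hs := hasDerivAt_sin_pi x
      have hc := hasDerivAt_cos_pi x
      have := ((((d3.mul hs).sub (d2.mul (hc.const_mul π))).sub
        (d1.mul (hs.const_mul (π ^ 2)))).add (d0.mul (hc.const_mul (π ^ 3)))).sub
        (((d1.mul hs).sub (d0.mul (hc.const_mul π))).const_mul K)
      refine this.congr_deriv ?_
      have e := heq x hx
      simp only [D_zero, Nat.reduceAdd]
      linear_combination sin (π * x) * e)
  have hp := mul_pos (hpos x hx) (sin_pi_pos hx)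
  have := (mul_eq_zero.mp hx0).resolve_right hp.ne'
  linarith

/-- The mean value theorem on `[0, 1/2]` gives a point where `u' = 2 u(1/2) > 0`. -/
lemma energy_pos {u : ℝ → ℝ} (hu : ContDiffOn ℝ 4 u (Icc 0 1)) (h0 : u 0 = 0)
    (hpos : ∀ x ∈ Ioo (0:ℝ) 1, 0 < u x) : 0 < ∫ t in (0:ℝ)..1, (D 1 u t) ^ 2 := by
  have hsub : Icc (0:ℝ) (1/2) ⊆ Icc 0 1 := Icc_subset_Icc_right (by norm_num)
  obtain ⟨c, hc, hc'⟩ := exists_hasDerivAt_eq_slope (D 0 u) (D 1 u) (a := 0) (b := 1/2)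
    (by norm_num) ((D_continuousOn hu (by norm_num)).mono hsub)
    (fun x hx => D_hasDerivAt hu (by norm_num) ⟨hx.1, by linarith [hx.2]⟩)
  have hh := hpos (1/2) ⟨by norm_num, by norm_num⟩
  simp only [D_zero, h0] at hc'
  refine intervalIntegral.integral_pos one_pos ((D_continuousOn hu (by norm_num)).pow 2)
    (fun x _ => sq_nonneg _) ⟨c, hsub (Ioo_subset_Icc_self hc), ?_⟩
  rw [hc']
  positivity

/-- If `D n u` agrees on `[0,1]` with a function differentiable on all of `ℝ`, then `D (n + 1) u` agrees
there, endpoints included, with the ordinary derivative of that function. -/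
lemma D_succ_eq {u f f' : ℝ → ℝ} {n : ℕ} (h : ∀ x ∈ Icc (0:ℝ) 1, D n u x = f x)
    (hf : ∀ x, HasDerivAt f (f' x) x) : ∀ x ∈ Icc (0:ℝ) 1, D (n + 1) u x = f' x := by
  intro x hx
  unfold D at *
  rw [iteratedDerivWithin_succ, derivWithin_congr h (h x hx)]
  exact (hf x).hasDerivWithinAt.derivWithin (uniqueDiffOn_Icc one_pos x hx)

lemma integral_cos_pi_sq : ∫ t in (0:ℝ)..1, (cos (π * t)) ^ 2 = 1 / 2 := by
  rw [intervalIntegral.integral_comp_mul_left (fun t => cos t ^ 2) pi_ne_zero, integral_cos_sq]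
  simp
  field_simp

/-- The nonlinear eigenvalue problem
`u'''' - (a + b∫₀¹(u')²)u'' = λ·u` with hinged boundary conditions has a positive solution
iff `λ > π⁴ + a·π²`. -/
theorem stmt8 (a b lam : ℝ) (ha : 0 < a) (hb : 0 < b) :
    (∃ u : ℝ → ℝ, ContDiffOn ℝ 4 u (Set.Icc 0 1) ∧
        (∀ x ∈ Set.Ioo (0:ℝ) 1, D 4 u x - KCoef a b u * D 2 u x = lam * u x) ∧ BC u ∧
        (∀ x ∈ Set.Ioo (0:ℝ) 1, 0 < u x)) ↔ π ^ 4 + a * π ^ 2 < lam := by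
  constructor
  · rintro ⟨u, hu, heq, hbc, hpos⟩
    rw [lam_eq_of_solution hu heq hbc hpos, KCoef]
    have := mul_pos (mul_pos hb (energy_pos hu hbc.1 hpos)) (pow_pos pi_pos 2)
    linarith
  · intro hlam
    -- the amplitude solving `λ = π⁴ + (a + b c² π² / 2) π²`
    set r : ℝ := 2 * (lam - π ^ 4 - a * π ^ 2) / (b * π ^ 4) with hr
    have hrpos : 0 < r := by
      have : 0 < lam - π ^ 4 - a * π ^ 2 := by linarith
      have := pi_pos
      positivity
    set c := √r with hc
    have hcpos : 0 < c := Real.sqrt_pos.mpr hrpos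
    have hc2 : c ^ 2 * (b * π ^ 4) = 2 * (lam - π ^ 4 - a * π ^ 2) := by
      rw [hc, Real.sq_sqrt hrpos.le, hr]
      have := pi_pos
      field_simp
    let u : ℝ → ℝ := fun x => c * sin (π * x)
    have e0 : ∀ x ∈ Icc (0:ℝ) 1, D 0 u x = c * sin (π * x) := fun x _ => D_zero u x
    have e1 := D_succ_eq e0 fun x => (hasDerivAt_sin_pi x).const_mul c
    have e2 := D_succ_eq e1 fun x => ((hasDerivAt_cos_pi x).const_mul π).const_mul c
    have e3 := D_succ_eq e2 fun x =>
      (((hasDerivAt_sin_pi x).const_mul π).neg.const_mul π).const_mul c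
    have e4 := D_succ_eq e3 fun x =>
      ((((hasDerivAt_cos_pi x).const_mul π).const_mul π).neg.const_mul π).const_mul c
    have hK : KCoef a b u = a + b * (c ^ 2 * π ^ 2 / 2) := by
      have : ∫ t in (0:ℝ)..1, (D 1 u t) ^ 2
          = ∫ t in (0:ℝ)..1, (c ^ 2 * π ^ 2) * (cos (π * t)) ^ 2 := by
        refine intervalIntegral.integral_congr fun t ht => ?_
        rw [uIcc_of_le zero_le_one] at ht
        have := e1 t ht
        simp only [zero_add] at this
        simp only [this]
        ring
      rw [KCoef, this, intervalIntegral.integral_const_mul, integral_cos_pi_sq]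
      ring
    refine ⟨u, ?_, ?_, ⟨?_, ?_, ?_, ?_⟩, fun x hx => mul_pos hcpos (sin_pi_pos hx)⟩
    · exact ContDiff.contDiffOn (by fun_prop)
    · intro x hx
      have hx := Ioo_subset_Icc_self hx
      have h2 := e2 x hx
      have h4 := e4 x hx
      simp only [zero_add, Nat.reduceAdd] at h2 h4
      rw [hK, h2, h4]
      simp only [u]
      linear_combination (c * sin (π * x) / 2) * hc2
    · simp [u]
    · simp [u]
    · have := e2 0 (by simp)
      simpa using this
    · have := e2 1 (by simp)
      simpa using this
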